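/- arXiv:2009.00848 — 2 statements merged into one kernel-verified Lean document; each statement's English description precedes it below -/
import Mathlib

section
/- The running composite likelihood ratio test has Type I error at most a: if ν_{θ*} = inf{n ∈ ℕ : M_{α,β,n} > 1/a} denotes the stopping time of the sequential test, then sup_{θ*∈Θ_0} Pr_{θ*}(ν_{θ*} < ∞) ≤ a for every a ∈ (0,1). -/
open MeasureTheory ENNReal
open scoped BigOperators Classical

noncomputable section

/-- Division in `ℝ≥0∞` with the convention that the ratio is `0` when the
denominator is `0`. -/
def safeDiv (a b : ℝ≥0∞) : ℝ≥0∞ := if b = 0 then 0 else a / b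

variable {d : ℕ} {π : Fin d → Type*} [∀ i, MeasurableSpace (π i)]

/-- The marginal density on the coordinates in `S`, obtained by integrating a density
out over the coordinates in `[d] \ S` (as a function of the full vector, depending only
on the coordinates in `S`). -/
def marginal (μ : ∀ i, Measure (π i)) (S : Finset (Fin d))
    (f : (∀ i, π i) → ℝ≥0∞) : (∀ i, π i) → ℝ≥0∞ :=
  MeasureTheory.lmarginal μ Sᶜ f

/-- The conditional density of the coordinates in `T1` given the coordinates in `T2`,
with the convention that the ratio is `0` when the denominator is `0`. -/
def condDens (μ : ∀ i, Measure (π i)) (T1 T2 : Finset (Fin d))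
    (f : (∀ i, π i) → ℝ≥0∞) (x : ∀ i, π i) : ℝ≥0∞ :=
  safeDiv (marginal μ (T1 ∪ T2) f x) (marginal μ T2 f x)

/-- `𝕊_d`: the nonempty subsets of `[d]`. -/
abbrev Sd (d : ℕ) := {S : Finset (Fin d) // S.Nonempty}

/-- `𝕋_d`: ordered pairs of disjoint nonempty subsets of `[d]`. -/
abbrev Td (d : ℕ) := {T : Finset (Fin d) × Finset (Fin d) //
  T.1.Nonempty ∧ T.2.Nonempty ∧ Disjoint T.1 T.2}

/-- The individual composite likelihood
`p_{α,β}(x;θ) = ∏_S p_S(x_S;θ)^(α_S/γ) ∏_T p(x_{T←}|x_{T→};θ)^(β_T/γ)`,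
where `f = p(·;θ)` is the joint density. -/
def compLik (μ : ∀ i, Measure (π i)) (α : Sd d → ℝ) (β : Td d → ℝ) (γ : ℝ)
    (f : (∀ i, π i) → ℝ≥0∞) (x : ∀ i, π i) : ℝ≥0∞ :=
  (∏ S : Sd d, marginal μ S.1 f x ^ (α S / γ)) *
  (∏ T : Td d, condDens μ T.1.1 T.1.2 f x ^ (β T / γ))


open ProbabilityTheory

/-- `g` does not depend on the coordinates in `s`. -/
def Indif {d : ℕ} {π : Fin d → Type*} (s : Finset (Fin d))
    (g : (∀ i, π i) → ℝ≥0∞) : Prop :=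
  ∀ x y : ∀ i, π i, (∀ i, i ∉ s → x i = y i) → g x = g y

section aux

variable {d : ℕ} {π : Fin d → Type*} [∀ i, MeasurableSpace (π i)]
  (μ : ∀ i, Measure (π i)) [∀ i, SigmaFinite (μ i)]

set_option linter.unusedSectionVars false
theorem indif_marginal (S s : Finset (Fin d)) (h : s ⊆ Sᶜ) (f : (∀ i, π i) → ℝ≥0∞) :
    Indif s (marginal μ S f) := by
  intro x y hxy
  exact lmarginal_congr μ f (fun i hi => hxy i (fun h' => hi (h h')))

theorem meas_marginal (S : Finset (Fin d)) {f : (∀ i, π i) → ℝ≥0∞} (hf : Measurable f) :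
    Measurable (marginal μ S f) := hf.lmarginal μ

theorem lmarginal_pull (s : Finset (Fin d)) {f g : (∀ i, π i) → ℝ≥0∞}
    (hf : Measurable f) (hg : Indif s g) :
    lmarginal μ s (fun x => g x * f x) = fun x => g x * lmarginal μ s f x := by
  ext x
  unfold lmarginal
  rw [← lintegral_const_mul (μ := Measure.pi fun i : s => μ i) (g x)
    (f := fun y => f (Function.updateFinset x s y)) (hf.comp measurable_updateFinset)]
  refine lintegral_congr fun y => ?_
  dsimp only
  rw [hg (Function.updateFinset x s y) x]
  intro i hi
  simp [Function.updateFinset, hi]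

theorem lintegral_dens (S : Finset (Fin d)) {f g : (∀ i, π i) → ℝ≥0∞}
    (hf : Measurable f) (hgm : Measurable g) (hg : Indif Sᶜ g) (x0 : ∀ i, π i) :
    ∫⁻ x, g x ∂((Measure.pi μ).withDensity f)
      = lmarginal μ S (fun x => g x * marginal μ S f x) x0 := by
  rw [lintegral_withDensity_eq_lintegral_mul _ hf hgm, lintegral_eq_lmarginal_univ x0,
    ← Finset.union_compl S, lmarginal_union μ _ (hf.mul hgm) disjoint_compl_right]
  have : (f * g) = fun x => g x * f x := by ext x; simp [mul_comm]
  rw [this, lmarginal_pull μ Sᶜ hf hg]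
  rfl

theorem lmarginal_marginal (S : Finset (Fin d)) {f : (∀ i, π i) → ℝ≥0∞}
    (hf : Measurable f) (x0 : ∀ i, π i) :
    lmarginal μ S (marginal μ S f) x0 = ∫⁻ x, f x ∂(Measure.pi μ) := by
  rw [lintegral_eq_lmarginal_univ x0,
    ← Finset.union_compl S, lmarginal_union μ _ hf disjoint_compl_right]
  rfl

theorem ae_marginal (S : Finset (Fin d)) {f : (∀ i, π i) → ℝ≥0∞}
    (hf : Measurable f) (h1 : ∫⁻ x, f x ∂(Measure.pi μ) = 1) (x0 : ∀ i, π i) :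
    ∀ᵐ x ∂((Measure.pi μ).withDensity f), marginal μ S f x ≠ 0 ∧ marginal μ S f x ≠ ∞ := by
  have hm := meas_marginal μ S hf
  have key : ∀ φ : ℝ≥0∞ → ℝ≥0∞, Measurable φ →
      lmarginal μ S (fun x => φ (marginal μ S f x) * marginal μ S f x) x0 = 0 →
      ∀ᵐ x ∂((Measure.pi μ).withDensity f), φ (marginal μ S f x) = 0 := by
    intro φ hφ h0
    have := lintegral_dens μ S hf (g := fun x => φ (marginal μ S f x)) (hφ.comp hm)
      (fun x y hxy => congrArg φ (indif_marginal μ S Sᶜ subset_rfl f x y hxy)) x0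
    rw [h0] at this
    exact (lintegral_eq_zero_iff (hφ.comp hm)).1 this
  have hz := key (Set.indicator {0} 1) (measurable_one.indicator (measurableSet_singleton _)) (by
    have : (fun x => Set.indicator {0} 1 (marginal μ S f x) * marginal μ S f x)
        = fun _ => (0:ℝ≥0∞) := by
      ext x
      by_cases h : marginal μ S f x = 0 <;> simp [h]
    rw [this]; simp [lmarginal])
  have ht := key (Set.indicator {∞} 1) (measurable_one.indicator (measurableSet_singleton _)) (by
    have e : (fun x => Set.indicator {∞} 1 (marginal μ S f x) * marginal μ S f x)
        = fun x => ∞ * Set.indicator {∞} 1 (marginal μ S f x) := by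
      ext x
      by_cases h : marginal μ S f x = ∞ <;> simp [h]
    have hle : lmarginal μ S (fun x => ∞ * Set.indicator {∞} 1 (marginal μ S f x)) x0 ≤ 1 := by
      rw [← h1, ← lmarginal_marginal μ S hf x0, ← e]
      refine lmarginal_mono (fun x => ?_) x0
      by_cases h : marginal μ S f x = ∞ <;> simp [h]
    have hi : Measurable fun x => (Set.indicator {∞} 1 (marginal μ S f x) : ℝ≥0∞) :=
      (measurable_one.indicator (measurableSet_singleton _)).comp hm
    rw [e]
    rw [lmarginal_pull μ S (g := fun _ => ∞) hi (fun _ _ _ => rfl)] at hle ⊢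
    dsimp only at hle ⊢
    by_cases h : lmarginal μ S (fun x => Set.indicator {∞} 1 (marginal μ S f x)) x0 = 0
    · rw [h, mul_zero]
    · rw [ENNReal.top_mul h] at hle
      exact absurd hle (by simp))
  filter_upwards [hz, ht] with x hx1 hx2
  constructor
  · intro h; simp [h] at hx1
  · intro h; simp [h] at hx2

theorem safeDiv_le (a b : ℝ≥0∞) : safeDiv a b ≤ a * b⁻¹ := by
  unfold safeDiv
  split_ifs
  · simp
  · rw [div_eq_mul_inv]

theorem meas_safeDiv {Y : Type*} [MeasurableSpace Y] {a b : Y → ℝ≥0∞} (ha : Measurable a)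
    (hb : Measurable b) : Measurable fun y => safeDiv (a y) (b y) := by
  unfold safeDiv
  exact Measurable.ite (hb (measurableSet_singleton 0)) measurable_const (ha.div hb)

theorem ratio_S (S : Finset (Fin d)) {f g : (∀ i, π i) → ℝ≥0∞}
    (hf : Measurable f) (hg : Measurable g) (hg1 : ∫⁻ x, g x ∂(Measure.pi μ) = 1)
    (x0 : ∀ i, π i) :
    ∫⁻ x, marginal μ S g x * (marginal μ S f x)⁻¹ ∂((Measure.pi μ).withDensity f) ≤ 1 := by
  rw [lintegral_dens μ S hf (g := fun x => marginal μ S g x * (marginal μ S f x)⁻¹)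
    ((meas_marginal μ S hg).mul (meas_marginal μ S hf).inv) _ x0]
  · rw [← hg1, ← lmarginal_marginal μ S hg x0]
    refine lmarginal_mono (fun x => ?_) x0
    dsimp only
    rw [mul_assoc]
    exact mul_le_of_le_one_right' (ENNReal.inv_mul_le_one _)
  · intro x y h
    dsimp only
    rw [indif_marginal μ S _ subset_rfl f x y h, indif_marginal μ S _ subset_rfl g x y h]

theorem ratio_T (A B : Finset (Fin d)) (hAB : Disjoint A B) {f g : (∀ i, π i) → ℝ≥0∞}
    (hf : Measurable f) (hg : Measurable g) (hf1 : ∫⁻ x, f x ∂(Measure.pi μ) = 1)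
    (x0 : ∀ i, π i) :
    ∫⁻ x, condDens μ A B g x * (condDens μ A B f x)⁻¹ ∂((Measure.pi μ).withDensity f) ≤ 1 := by
  have mgA := meas_marginal μ (A ∪ B) hg
  have mgB := meas_marginal μ B hg
  have mfA := meas_marginal μ (A ∪ B) hf
  have mfB := meas_marginal μ B hf
  have s1 : (A ∪ B)ᶜ ⊆ Bᶜ := by
    intro i; simp
  have hAc : A ⊆ Bᶜ := Finset.subset_compl_iff_disjoint_right.2 hAB
  calc ∫⁻ x, condDens μ A B g x * (condDens μ A B f x)⁻¹ ∂((Measure.pi μ).withDensity f)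
      ≤ ∫⁻ x, (marginal μ (A ∪ B) g x * (marginal μ B g x)⁻¹) *
          (marginal μ B f x * (marginal μ (A ∪ B) f x)⁻¹) ∂((Measure.pi μ).withDensity f) := by
        refine lintegral_mono_ae ?_
        filter_upwards [ae_marginal μ B hf hf1 x0, ae_marginal μ (A ∪ B) hf hf1 x0] with x hx hx'
        refine mul_le_mul' (safeDiv_le _ _) ?_
        unfold condDens safeDiv
        rw [if_neg hx.1, ENNReal.inv_div (Or.inl hx.2) (Or.inl hx.1), div_eq_mul_inv]
    _ = lmarginal μ (A ∪ B) (fun x => (marginal μ (A ∪ B) g x * (marginal μ B g x)⁻¹) *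
          (marginal μ B f x * (marginal μ (A ∪ B) f x)⁻¹) * marginal μ (A ∪ B) f x) x0 := by
        refine lintegral_dens μ (A ∪ B) hf ((mgA.mul mgB.inv).mul (mfB.mul mfA.inv)) ?_ x0
        intro x y h
        simp only [Pi.mul_apply, Pi.inv_apply]
        rw [indif_marginal μ (A ∪ B) _ subset_rfl f x y h,
          indif_marginal μ (A ∪ B) _ subset_rfl g x y h,
          indif_marginal μ B _ s1 f x y h, indif_marginal μ B _ s1 g x y h]
    _ ≤ lmarginal μ (A ∪ B) (fun x => ((marginal μ B g x)⁻¹ * marginal μ B f x) *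
          marginal μ (A ∪ B) g x) x0 := by
        refine lmarginal_mono (fun x => ?_) x0
        dsimp only
        calc _ = ((marginal μ B g x)⁻¹ * marginal μ B f x * marginal μ (A ∪ B) g x) *
              ((marginal μ (A ∪ B) f x)⁻¹ * marginal μ (A ∪ B) f x) := by ring
          _ ≤ _ := mul_le_of_le_one_right' (ENNReal.inv_mul_le_one _)
    _ = lmarginal μ B (lmarginal μ A (fun x => ((marginal μ B g x)⁻¹ * marginal μ B f x) *
          marginal μ (A ∪ B) g x)) x0 := by
        exact congrFun (lmarginal_union' μ _ ((mgB.inv.mul mfB).mul mgA) hAB) x0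
    _ = lmarginal μ B (fun x => ((marginal μ B g x)⁻¹ * marginal μ B f x) *
          marginal μ B g x) x0 := by
        rw [lmarginal_pull μ A mgA]
        · have : lmarginal μ A (marginal μ (A ∪ B) g) = marginal μ B g := by
            unfold marginal
            rw [← lmarginal_union μ _ hg]
            · congr 1
              ext i
              have : i ∈ A → i ∉ B := fun h => Finset.disjoint_left.1 hAB h
              simp only [Finset.mem_union, Finset.mem_compl]
              tauto
            · exact Finset.disjoint_left.2 (fun i hi => by simp [hi])
          rw [this]
        · intro x y h
          dsimp only
          rw [indif_marginal μ B _ hAc f x y h, indif_marginal μ B _ hAc g x y h]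
    _ ≤ lmarginal μ B (marginal μ B f) x0 := by
        refine lmarginal_mono (fun x => ?_) x0
        dsimp only
        calc _ = marginal μ B f x * ((marginal μ B g x)⁻¹ * marginal μ B g x) := by ring
          _ ≤ _ := mul_le_of_le_one_right' (ENNReal.inv_mul_le_one _)
    _ = 1 := by rw [lmarginal_marginal μ B hf x0, hf1]

theorem ae_condDens (A B : Finset (Fin d)) {f : (∀ i, π i) → ℝ≥0∞}
    (hf : Measurable f) (hf1 : ∫⁻ x, f x ∂(Measure.pi μ) = 1) (x0 : ∀ i, π i) :
    ∀ᵐ x ∂((Measure.pi μ).withDensity f),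
      condDens μ A B f x ≠ 0 ∧ condDens μ A B f x ≠ ∞ := by
  filter_upwards [ae_marginal μ B hf hf1 x0, ae_marginal μ (A ∪ B) hf hf1 x0] with x hx hx'
  unfold condDens safeDiv
  rw [if_neg hx.1]
  exact ⟨ENNReal.div_ne_zero.2 ⟨hx'.1, hx.2⟩, ENNReal.div_ne_top hx'.2 hx.1⟩

/-- The factors of the composite likelihood, indexed by a sum type. -/
def fac (f : (∀ i, π i) → ℝ≥0∞) (k : Sd d ⊕ Td d) (x : ∀ i, π i) : ℝ≥0∞ :=
  Sum.elim (fun S : Sd d => marginal μ S.1 f x) (fun T : Td d => condDens μ T.1.1 T.1.2 f x) k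

/-- The exponents. -/
def wt (α : Sd d → ℝ) (β : Td d → ℝ) (γ : ℝ) (k : Sd d ⊕ Td d) : ℝ :=
  Sum.elim (fun S => α S / γ) (fun T => β T / γ) k

theorem compLik_eq (α : Sd d → ℝ) (β : Td d → ℝ) (γ : ℝ)
    (f : (∀ i, π i) → ℝ≥0∞) (x : ∀ i, π i) :
    compLik μ α β γ f x = ∏ k : Sd d ⊕ Td d, fac μ f k x ^ wt α β γ k := by
  simp [compLik, fac, wt, Fintype.prod_sum_type]

theorem meas_fac {f : (∀ i, π i) → ℝ≥0∞} (hf : Measurable f) (k : Sd d ⊕ Td d) :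
    Measurable (fac μ f k) := by
  rcases k with S | T
  · exact meas_marginal μ S.1 hf
  · exact meas_safeDiv (meas_marginal μ _ hf) (meas_marginal μ _ hf)

theorem ae_fac {f : (∀ i, π i) → ℝ≥0∞}
    (hf : Measurable f) (hf1 : ∫⁻ x, f x ∂(Measure.pi μ) = 1) (x0 : ∀ i, π i) :
    ∀ᵐ x ∂((Measure.pi μ).withDensity f), ∀ k, fac μ f k x ≠ 0 ∧ fac μ f k x ≠ ∞ := by
  rw [ae_all_iff]
  rintro (S | T)
  · exact ae_marginal μ S.1 hf hf1 x0
  · exact ae_condDens μ _ _ hf hf1 x0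

theorem ae_compLik (α : Sd d → ℝ) (β : Td d → ℝ) (γ : ℝ) {f : (∀ i, π i) → ℝ≥0∞}
    (hf : Measurable f) (hf1 : ∫⁻ x, f x ∂(Measure.pi μ) = 1) (x0 : ∀ i, π i) :
    ∀ᵐ x ∂((Measure.pi μ).withDensity f), compLik μ α β γ f x ≠ 0 := by
  filter_upwards [ae_fac μ hf hf1 x0] with x hx
  rw [compLik_eq, Finset.prod_ne_zero_iff]
  intro k _ h
  rw [ENNReal.rpow_eq_zero_iff] at h
  rcases h with h | h
  · exact (hx k).1 h.1
  · exact (hx k).2 h.1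

theorem ratio_compLik (α : Sd d → ℝ) (β : Td d → ℝ) (γ : ℝ) {f g : (∀ i, π i) → ℝ≥0∞}
    (hw : ∀ k, 0 ≤ wt α β γ k) (hw1 : ∑ k, wt α β γ k = 1)
    (hf : Measurable f) (hf1 : ∫⁻ x, f x ∂(Measure.pi μ) = 1)
    (hg : Measurable g) (hg1 : ∫⁻ x, g x ∂(Measure.pi μ) = 1) (x0 : ∀ i, π i) :
    ∫⁻ x, compLik μ α β γ g x * (compLik μ α β γ f x)⁻¹ ∂((Measure.pi μ).withDensity f) ≤ 1 := by
  calc _ = ∫⁻ x, ∏ k : Sd d ⊕ Td d, (fac μ g k x * (fac μ f k x)⁻¹) ^ wt α β γ k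
          ∂((Measure.pi μ).withDensity f) := by
        refine lintegral_congr_ae ?_
        filter_upwards [ae_fac μ hf hf1 x0] with x hx
        rw [compLik_eq, compLik_eq, ENNReal.prod_inv_distrib, ← Finset.prod_mul_distrib]
        · refine Finset.prod_congr rfl fun k _ => ?_
          rw [ENNReal.mul_rpow_of_nonneg _ _ (hw k), ENNReal.inv_rpow]
        · intro i _ j _ _
          exact Or.inr (ENNReal.rpow_ne_top_of_nonneg (hw j) (hx j).2)
    _ ≤ ∏ k : Sd d ⊕ Td d, (∫⁻ x, fac μ g k x * (fac μ f k x)⁻¹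
          ∂((Measure.pi μ).withDensity f)) ^ wt α β γ k :=
        ENNReal.lintegral_prod_norm_pow_le _
          (fun k _ => ((meas_fac μ hg k).mul (meas_fac μ hf k).inv).aemeasurable) hw1
          (fun k _ => hw k)
    _ ≤ 1 := by
        refine Finset.prod_le_one' fun k _ => ?_
        refine ENNReal.rpow_le_one ?_ (hw k)
        rcases k with S | T
        · exact ratio_S μ S.1 hf hg hg1 x0
        · exact ratio_T μ _ _ T.2.2.2 hf hg hf1 x0

theorem meas_marginal_param {Θ : Type*} [MeasurableSpace Θ] (p : Θ → (∀ i, π i) → ℝ≥0∞)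
    (hp : Measurable (Function.uncurry p)) (S : Finset (Fin d)) :
    Measurable fun z : Θ × (∀ i, π i) => marginal μ S (p z.1) z.2 := by
  unfold marginal lmarginal
  refine Measurable.lintegral_prod_right (f := fun (z : Θ × (∀ i, π i)) y =>
    p z.1 (Function.updateFinset z.2 Sᶜ y)) ?_
  exact hp.comp ((measurable_fst.comp measurable_fst).prodMk
    (measurable_updateFinset'.comp ((measurable_snd.comp measurable_fst).prodMk measurable_snd)))

theorem meas_compLik_param {Θ : Type*} [MeasurableSpace Θ] (p : Θ → (∀ i, π i) → ℝ≥0∞)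
    (hp : Measurable (Function.uncurry p)) (α : Sd d → ℝ) (β : Td d → ℝ) (γ : ℝ) :
    Measurable fun z : Θ × (∀ i, π i) => compLik μ α β γ (p z.1) z.2 := by
  unfold compLik
  refine Measurable.mul ?_ ?_
  · refine Finset.measurable_fun_prod _ fun S _ => ?_
    exact (meas_marginal_param μ p hp _).pow_const _
  · refine Finset.measurable_fun_prod _ fun T _ => ?_
    exact (meas_safeDiv (meas_marginal_param μ p hp _) (meas_marginal_param μ p hp _)).pow_const _

end aux

/-- Stopped multiplicative process. -/
def stopped {Ω : Type*} (c : ℝ≥0∞) (Z : ℕ → Ω → ℝ≥0∞) : ℕ → Ω → ℝ≥0∞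
  | 0, _ => 1
  | n + 1, ω => if c < stopped c Z n ω then stopped c Z n ω else stopped c Z n ω * Z n ω

theorem stopped_dich {Ω : Type*} (c : ℝ≥0∞) (Z : ℕ → Ω → ℝ≥0∞) (ω : Ω) (n : ℕ) :
    c < stopped c Z n ω ∨ stopped c Z n ω = ∏ i ∈ Finset.range n, Z i ω := by
  induction n with
  | zero => right; simp [stopped]
  | succ n ih =>
    rw [Finset.prod_range_succ]
    by_cases h : c < stopped c Z n ω
    · left; simpa [stopped, h] using h
    · right
      rw [← ih.resolve_left h]
      simp [stopped, h]

/-- Ville's inequality, in multiplicative form. -/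
theorem ville_mul {Ω : Type*} [m : MeasurableSpace Ω] (Pr : Measure Ω) [IsProbabilityMeasure Pr]
    (F : ℕ → MeasurableSpace Ω) (hFm : ∀ n, F n ≤ m) (hFmono : ∀ n, F n ≤ F (n + 1))
    (Z : ℕ → Ω → ℝ≥0∞) (hZ : ∀ n, @Measurable _ _ (F (n + 1)) _ (Z n))
    (hE : ∀ n (U : Ω → ℝ≥0∞), @Measurable _ _ (F n) _ U →
      ∫⁻ ω, U ω * Z n ω ∂Pr ≤ ∫⁻ ω, U ω ∂Pr)
    (c : ℝ≥0∞) (hc0 : c ≠ 0) (hct : c ≠ ∞) :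
    Pr {ω | ∃ n, c < ∏ i ∈ Finset.range n, Z i ω} ≤ c⁻¹ := by
  have hWm : ∀ n, @Measurable _ _ (F n) _ (stopped c Z n) := by
    intro n
    induction n with
    | zero => exact @measurable_const _ _ _ (F 0) _
    | succ n ih =>
      have h1 : @Measurable _ _ (F (n + 1)) _ (stopped c Z n) := ih.mono (hFmono n) le_rfl
      exact Measurable.ite (m := F (n + 1)) (h1 measurableSet_Ioi) h1 (h1.mul (hZ n))
  have hWE : ∀ n, ∫⁻ ω, stopped c Z n ω ∂Pr ≤ 1 := by
    intro n
    induction n with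
    | zero => simp [stopped]
    | succ n ih =>
      refine le_trans ?_ ih
      set A := {ω | c < stopped c Z n ω} with hA
      have hAF : MeasurableSet[F n] A := hWm n measurableSet_Ioi
      have hA' : MeasurableSet A := hFm n _ hAF
      calc ∫⁻ ω, stopped c Z (n + 1) ω ∂Pr
          = ∫⁻ ω, (A.indicator (stopped c Z n) ω + Aᶜ.indicator (stopped c Z n) ω * Z n ω) ∂Pr := by
            refine lintegral_congr fun ω => ?_
            by_cases h : c < stopped c Z n ω <;> simp [stopped, hA, h, Set.indicator]
        _ = ∫⁻ ω, A.indicator (stopped c Z n) ω ∂Pr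
            + ∫⁻ ω, Aᶜ.indicator (stopped c Z n) ω * Z n ω ∂Pr :=
            lintegral_add_left (((hWm n).mono (hFm n) le_rfl).indicator hA') _
        _ ≤ ∫⁻ ω, A.indicator (stopped c Z n) ω ∂Pr
            + ∫⁻ ω, Aᶜ.indicator (stopped c Z n) ω ∂Pr := by
            refine add_le_add le_rfl ?_
            exact hE n _ ((hWm n).indicator hAF.compl)
        _ = ∫⁻ ω, stopped c Z n ω ∂Pr := by
            rw [lintegral_indicator hA', lintegral_indicator hA'.compl, lintegral_add_compl _ hA']
  have hsub : {ω | ∃ n, c < ∏ i ∈ Finset.range n, Z i ω} ⊆ ⋃ n, {ω | c < stopped c Z n ω} := by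
    rintro ω ⟨n, hn⟩
    refine Set.mem_iUnion.2 ⟨n, ?_⟩
    rcases stopped_dich c Z ω n with h | h
    · exact h
    · simpa [h] using hn
  have hmono : Monotone fun n => {ω | c < stopped c Z n ω} := by
    refine monotone_nat_of_le_succ fun n ω h => ?_
    have h' : c < stopped c Z n ω := h
    simpa [stopped, h'] using h'
  refine (measure_mono hsub).trans ?_
  rw [hmono.measure_iUnion]
  refine iSup_le fun n => ?_
  calc Pr {ω | c < stopped c Z n ω} ≤ Pr {ω | c ≤ stopped c Z n ω} :=
        measure_mono (Set.ofPred_subset_ofPred.2 fun ω h => le_of_lt h)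
    _ ≤ (∫⁻ ω, stopped c Z n ω ∂Pr) / c :=
        meas_ge_le_lintegral_div ((hWm n).mono (hFm n) le_rfl).aemeasurable hc0 hct
    _ ≤ 1 / c := by gcongr; exact hWE n
    _ = c⁻¹ := one_div c

/-- The running composite likelihood ratio test has Type I error at
most `a`: if `ν_{θ*} = inf{n ∈ ℕ : M_{α,β,n} > 1/a}` is the stopping time of the
sequential test, then `sup_{θ*∈Θ₀} Pr_{θ*}(ν_{θ*} < ∞) ≤ a` for every `a ∈ (0,1)`.
(Here `{ν_{θ*} < ∞} = {∃ n ≥ 1 : M_{α,β,n} > 1/a}`, and the running statistic is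
`M_{α,β,n} = ∏_{i=1}^n p_{α,β}(X_i;θ̃_{i-1}) / ∏_{i=1}^n p_{α,β}(X_i;θ̂_n)`.) -/
theorem running_CLRT_type_I_error
    {d : ℕ} (hd : 1 ≤ d)
    {π : Fin d → Type*} [∀ i, MeasurableSpace (π i)]
    (μ : ∀ i, Measure (π i)) [∀ i, SigmaFinite (μ i)]
    {Θ : Type*} [MeasurableSpace Θ]
    (p : Θ → (∀ i, π i) → ℝ≥0∞)
    (hp_meas : Measurable (Function.uncurry p))
    (hp_prob : ∀ θ : Θ, ∫⁻ x, p θ x ∂(Measure.pi μ) = 1)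
    (α : Sd d → ℝ) (β : Td d → ℝ)
    (hα : ∀ S, 0 ≤ α S) (hβ : ∀ T, 0 ≤ β T)
    (γ : ℝ) (hγ : γ = ∑ S, α S + ∑ T, β T) (hγpos : 0 < γ)
    {Ω : Type*} [MeasurableSpace Ω]
    (Pr : Measure Ω) [IsProbabilityMeasure Pr]
    (θstar : Θ)
    -- `X 0, X 1, X 2, …` is the i.i.d. sequence `X_1, X_2, …` (0-indexed),
    -- each observation having density `p(·;θ*)` with respect to `μ`
    (X : ℕ → Ω → (∀ i, π i))
    (hX : ∀ i, Measurable (X i))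
    (hiid : ProbabilityTheory.iIndepFun X Pr)
    (hlaw : ∀ i, Measure.map (X i) Pr = (Measure.pi μ).withDensity (p θstar))
    -- the natural filtration `F n = σ(X_1,…,X_n)` (so `F 0` is trivial)
    (F : ℕ → MeasurableSpace Ω)
    (hF : ∀ n, F n = MeasurableSpace.comap (fun ω => fun j : Fin n => X j ω)
      (inferInstance : MeasurableSpace (Fin n → ∀ i, π i)))
    -- non-anticipating estimators: `θtilde i` is the estimator `θ̃_i`
    -- built from `X_1,…,X_i`, i.e. measurable with respect to `F i`
    (θtilde : ℕ → Ω → Θ)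
    (hθtilde : ∀ i, @Measurable Ω Θ (F i) _ (θtilde i))
    -- null hypothesis parameter space and maximum composite likelihood
    -- estimators over `Θ₀`: `θhat n` is `F n`-measurable, `Θ₀`-valued and
    -- maximizes the composite likelihood of the first `n` observations over `Θ₀`
    (Θ0 : Set Θ)
    (θhat : ℕ → Ω → Θ)
    (hθhat_meas : ∀ n, @Measurable Ω Θ (F n) _ (θhat n))
    (hθhat_mem : ∀ n ω, θhat n ω ∈ Θ0)
    (hθhat_max : ∀ n ω, ∀ θ ∈ Θ0,
      (∏ i ∈ Finset.range n, compLik μ α β γ (p θ) (X i ω))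
        ≤ ∏ i ∈ Finset.range n, compLik μ α β γ (p (θhat n ω)) (X i ω))
    -- the DGP parameter lies in the null hypothesis set
    (hθstar : θstar ∈ Θ0)
    (a : ℝ) (ha0 : 0 < a) (ha1 : a < 1) :
    Pr {ω | ∃ n : ℕ, 0 < n ∧ 1 / ENNReal.ofReal a < safeDiv
        (∏ i ∈ Finset.range n, compLik μ α β γ (p (θtilde i ω)) (X i ω))
        (∏ i ∈ Finset.range n, compLik μ α β γ (p (θhat n ω)) (X i ω))}
      ≤ ENNReal.ofReal a := by
  have hΩ : Nonempty Ω := by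
    by_contra h
    rw [not_nonempty_iff] at h
    have := measure_univ (μ := Pr)
    simp [Set.univ_eq_empty_iff.2 h] at this
  obtain ⟨ω0⟩ := hΩ
  have x0 : ∀ i, π i := X 0 ω0
  have hpθ : ∀ θ, Measurable (p θ) := fun θ => hp_meas.comp measurable_prodMk_left
  have hw : ∀ k, 0 ≤ wt α β γ k := by
    rintro (S | T)
    · exact div_nonneg (hα S) hγpos.le
    · exact div_nonneg (hβ T) hγpos.le
  have hw1 : ∑ k, wt α β γ k = 1 := by
    simp only [wt, Fintype.sum_sum_type, Sum.elim_inl, Sum.elim_inr]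
    rw [← Finset.sum_div, ← Finset.sum_div, ← add_div, ← hγ, div_self hγpos.ne']
  obtain ⟨r, hr⟩ : ∃ r : Θ × (∀ i, π i) → ℝ≥0∞, ∀ z, r z =
      compLik μ α β γ (p z.1) z.2 * (compLik μ α β γ (p θstar) z.2)⁻¹ := ⟨_, fun _ => rfl⟩
  have hr_meas : Measurable r := by
    rw [funext hr]
    exact (meas_compLik_param μ p hp_meas α β γ).mul
      ((meas_compLik_param μ p hp_meas α β γ).comp
        (measurable_const.prodMk measurable_snd)).inv
  have hr1 : ∀ n θ, ∫⁻ x, r (θ, x) ∂(Measure.map (X n) Pr) ≤ 1 := by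
    intro n θ
    rw [hlaw]
    simp only [hr]
    exact ratio_compLik (f := p θstar) (g := p θ) μ α β γ hw hw1 (hpθ _) (hp_prob _) (hpθ θ) (hp_prob θ) x0
  have hFm : ∀ n, F n ≤ ‹MeasurableSpace Ω› := by
    intro n
    rw [hF n]
    have hm : Measurable (fun ω => fun j : Fin n => X j ω) :=
      measurable_pi_lambda _ fun j => hX j
    exact hm.comap_le
  have hFX : ∀ n (j : ℕ), j < n → @Measurable _ _ (F n) _ (X j) := by
    intro n j hj
    rw [hF n]
    exact (measurable_pi_apply (X := fun _ : Fin n => ∀ i, π i) (⟨j, hj⟩ : Fin n)).comp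
      (comap_measurable (fun ω => fun j : Fin n => X j ω))
  have hFmono : ∀ n, F n ≤ F (n + 1) := by
    intro n
    conv_lhs => rw [hF n]
    have hm : @Measurable _ _ (F (n + 1)) _ (fun ω => fun j : Fin n => X j ω) :=
      @measurable_pi_lambda _ _ _ (F (n + 1)) _ _ fun j => hFX _ _ (by omega)
    exact hm.comap_le
  set Z : ℕ → Ω → ℝ≥0∞ := fun n ω => r (θtilde n ω, X n ω) with hZdef
  have hZ : ∀ n, @Measurable _ _ (F (n + 1)) _ (Z n) := by
    intro n
    exact hr_meas.comp (((hθtilde n).mono (hFmono n) le_rfl).prodMk (hFX _ _ (Nat.lt_succ_self n)))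
  have hind : ∀ n, Indep (F n) (MeasurableSpace.comap (X n) inferInstance) Pr := by
    intro n
    have h := hiid.indepFun_finset (Finset.range n) {n} (by simp) hX
    have hφ : Measurable (fun (v : ↥(Finset.range n) → ∀ i, π i) =>
        fun j : Fin n => v ⟨j, by simp⟩) :=
      measurable_pi_lambda _ fun j => measurable_pi_apply _
    have hψ : Measurable (fun (v : ↥({n} : Finset ℕ) → ∀ i, π i) => v ⟨n, by simp⟩) :=
      measurable_pi_apply _
    have h2 := h.comp hφ hψ
    rw [hF n]
    exact h2
  have hE : ∀ n (U : Ω → ℝ≥0∞), @Measurable _ _ (F n) _ U →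
      ∫⁻ ω, U ω * Z n ω ∂Pr ≤ ∫⁻ ω, U ω ∂Pr := by
    intro n U hU
    have hVF : @Measurable _ _ (F n) _ (fun ω => (U ω, θtilde n ω)) := hU.prodMk (hθtilde n)
    have hV : Measurable (fun ω => (U ω, θtilde n ω)) := hVF.mono (hFm n) le_rfl
    have hI : IndepFun (fun ω => (U ω, θtilde n ω)) (X n) Pr :=
      indep_of_indep_of_le_left (hind n) hVF.comap_le
    have hmap := (indepFun_iff_map_prod_eq_prod_map_map hV.aemeasurable
      (hX n).aemeasurable).1 hI
    have hG : Measurable fun q : (ℝ≥0∞ × Θ) × (∀ i, π i) => q.1.1 * r (q.1.2, q.2) :=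
      (measurable_fst.comp measurable_fst).mul
        (hr_meas.comp ((measurable_snd.comp measurable_fst).prodMk measurable_snd))
    have : IsProbabilityMeasure (Measure.map (X n) Pr) :=
      Measure.isProbabilityMeasure_map (hX n).aemeasurable
    calc ∫⁻ ω, U ω * Z n ω ∂Pr
        = ∫⁻ q, q.1.1 * r (q.1.2, q.2) ∂(Measure.map (fun ω => ((U ω, θtilde n ω), X n ω)) Pr) := by
          rw [lintegral_map hG (hV.prodMk (hX n))]
      _ = ∫⁻ v, ∫⁻ x, v.1 * r (v.2, x) ∂(Measure.map (X n) Pr)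
            ∂(Measure.map (fun ω => (U ω, θtilde n ω)) Pr) := by
          rw [hmap, lintegral_prod _ hG.aemeasurable]
      _ ≤ ∫⁻ v, v.1 ∂(Measure.map (fun ω => (U ω, θtilde n ω)) Pr) := by
          refine lintegral_mono fun v => ?_
          rw [lintegral_const_mul _ (f := fun x => r (v.2, x)) (hr_meas.comp measurable_prodMk_left)]
          exact mul_le_of_le_one_right' (hr1 n v.2)
      _ = ∫⁻ ω, U ω ∂Pr := by rw [lintegral_map measurable_fst hV]
  have hc0 : 1 / ENNReal.ofReal a ≠ 0 := by simp
  have hct : 1 / ENNReal.ofReal a ≠ ∞ := by simp [ha0]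
  have hv := ville_mul Pr F hFm hFmono Z hZ hE (1 / ENNReal.ofReal a) hc0 hct
  rw [one_div, inv_inv, ← one_div] at hv
  refine le_trans (measure_mono_ae ?_) hv
  have hpos : ∀ᵐ ω ∂Pr, ∀ i, compLik μ α β γ (p θstar) (X i ω) ≠ 0 := by
    rw [ae_all_iff]
    intro i
    have := ae_compLik μ α β γ (hpθ θstar) (hp_prob θstar) x0
    rw [← hlaw i] at this
    exact ae_of_ae_map (hX i).aemeasurable this
  filter_upwards [hpos] with ω hω
  rintro ⟨n, -, hn⟩
  refine ⟨n, lt_of_lt_of_le hn ?_⟩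
  refine (safeDiv_le _ _).trans ?_
  have e : ∏ i ∈ Finset.range n, Z i ω =
      (∏ i ∈ Finset.range n, compLik μ α β γ (p (θtilde i ω)) (X i ω)) *
      (∏ i ∈ Finset.range n, compLik μ α β γ (p θstar) (X i ω))⁻¹ := by
    rw [ENNReal.prod_inv_distrib (fun i _ j _ _ => Or.inl (hω i)), ← Finset.prod_mul_distrib]
    exact Finset.prod_congr rfl fun i _ => hr _
  rw [e]
  refine mul_le_mul' le_rfl (ENNReal.inv_le_inv.2 ?_)
  exact hθhat_max n ω θstar hθstar
end
end

section
/- The sequence of sets (D_n^a)_{n∈ℕ}, where D_n^a = {θ ∈ Θ : R_{α,β,n}(θ) ≤ 1/a}, is a valid confidence sequence: Pr_{θ*}(∀ n ∈ ℕ : θ* ∈ D_n^a) ≥ 1 − a for every a ∈ (0,1). -/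
open MeasureTheory ENNReal
open scoped BigOperators Classical

noncomputable section

variable {d : ℕ} {π : Fin d → Type*} [∀ i, MeasurableSpace (π i)]

lemma aux_div_mul_le (a b : ℝ≥0∞) : a / b * b ≤ a := by
  rw [div_eq_mul_inv, mul_assoc]
  conv_rhs => rw [← mul_one a]
  gcongr
  rw [mul_comm]
  exact ENNReal.mul_inv_le_one b

lemma aux_lmarginal_mul (μ : ∀ i, Measure (π i)) [∀ i, SigmaFinite (μ i)] (s : Finset (Fin d))
    (h f : (∀ i, π i) → ℝ≥0∞) (hf : Measurable f)
    (hh : ∀ x y, (∀ i ∉ s, x i = y i) → h x = h y) (x : ∀ i, π i) :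
    lmarginal μ s (fun z => h z * f z) x = h x * lmarginal μ s f x := by
  unfold lmarginal
  rw [← lintegral_const_mul]
  · refine lintegral_congr fun y => ?_
    have e : h (Function.updateFinset x s y) = h x := by
      apply hh
      intro i hi
      simp [Function.updateFinset, hi]
    simp only [e]
  · exact hf.comp measurable_updateFinset

lemma aux_marginal_meas (μ : ∀ i, Measure (π i)) [∀ i, SigmaFinite (μ i)] (S : Finset (Fin d))
    {f : (∀ i, π i) → ℝ≥0∞} (hf : Measurable f) : Measurable (marginal μ S f) :=
  Measurable.lmarginal _ hf

lemma aux_marginal_congr (μ : ∀ i, Measure (π i)) (S : Finset (Fin d))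
    (f : (∀ i, π i) → ℝ≥0∞) {x y : ∀ i, π i} (h : ∀ i ∈ S, x i = y i) :
    marginal μ S f x = marginal μ S f y := by
  apply lmarginal_congr
  intro i hi
  exact h i (by simpa using hi)

lemma aux_lintegral_split (μ : ∀ i, Measure (π i)) [∀ i, SigmaFinite (μ i)] (S : Finset (Fin d))
    (f : (∀ i, π i) → ℝ≥0∞) (hf : Measurable f) (x : ∀ i, π i) :
    ∫⁻ z, f z ∂(Measure.pi μ) = lmarginal μ S (marginal μ S f) x := by
  rw [lintegral_eq_lmarginal_univ x, ← Finset.union_compl S,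
    lmarginal_union μ f hf disjoint_compl_right]
  rfl

lemma aux_lintegral_mul (μ : ∀ i, Measure (π i)) [∀ i, SigmaFinite (μ i)] (S : Finset (Fin d))
    (h f : (∀ i, π i) → ℝ≥0∞) (hf : Measurable f) (hhm : Measurable h)
    (hh : ∀ x y, (∀ i ∈ S, x i = y i) → h x = h y) (x : ∀ i, π i) :
    ∫⁻ z, h z * f z ∂(Measure.pi μ) = lmarginal μ S (fun z => h z * marginal μ S f z) x := by
  rw [aux_lintegral_split μ S (fun z => h z * f z) (hhm.mul hf) x]
  congr 1
  ext z
  exact aux_lmarginal_mul μ Sᶜ h f hf (fun x y hxy => hh x y (fun i hi => hxy i (by simpa using hi))) z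

lemma aux_ae_good (μ : ∀ i, Measure (π i)) [∀ i, SigmaFinite (μ i)] (S : Finset (Fin d))
    (g : (∀ i, π i) → ℝ≥0∞) (hg : Measurable g) (hg1 : ∫⁻ x, g x ∂(Measure.pi μ) = 1)
    (x₀ : ∀ i, π i) :
    ∀ᵐ x ∂((Measure.pi μ).withDensity g), marginal μ S g x ≠ 0 ∧ marginal μ S g x ≠ ∞ := by
  have hm := aux_marginal_meas μ S hg
  have hset : MeasurableSet {x | ¬ (marginal μ S g x ≠ 0 ∧ marginal μ S g x ≠ ∞)} := by
    apply MeasurableSet.compl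
    exact ((hm (measurableSet_singleton 0)).compl).inter ((hm (measurableSet_singleton ∞)).compl)
  rw [ae_iff, withDensity_apply _ hset, ← lintegral_indicator hset]
  set B := {x | ¬ (marginal μ S g x ≠ 0 ∧ marginal μ S g x ≠ ∞)} with hB
  have h1 : ∀ x, B.indicator g x = B.indicator 1 x * g x := by
    intro x; by_cases hx : x ∈ B <;> simp [hx]
  simp_rw [h1]
  rw [aux_lintegral_mul μ S (B.indicator 1) g hg (measurable_one.indicator hset) _ x₀]
  · have h2 : lmarginal μ S (marginal μ S g) x₀ = 1 := by
      rw [← aux_lintegral_split μ S g hg x₀, hg1]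
    unfold lmarginal at h2 ⊢
    have h3 := ae_lt_top (hm.comp (measurable_updateFinset (x := x₀) (s := S))) (by
      simp only [Function.comp_def]; rw [h2]; simp)
    rw [lintegral_eq_zero_iff']
    · filter_upwards [h3] with y hy
      simp only [Function.comp_def] at hy
      by_cases hx : Function.updateFinset x₀ S y ∈ B
      · have : marginal μ S g (Function.updateFinset x₀ S y) = 0 := by
          by_contra h0
          exact hx ⟨h0, hy.ne⟩
        simp [this]
      · simp [hx]
    · exact ((((measurable_one.indicator hset).mul hm)).comp measurable_updateFinset).aemeasurable
  · intro x y hxy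
    have := aux_marginal_congr μ S g hxy
    simp [Set.indicator, hB, this]

lemma aux_S (μ : ∀ i, Measure (π i)) [∀ i, SigmaFinite (μ i)] (S : Finset (Fin d))
    (f g : (∀ i, π i) → ℝ≥0∞) (hf : Measurable f) (hg : Measurable g)
    (hf1 : ∫⁻ x, f x ∂(Measure.pi μ) = 1) (x₀ : ∀ i, π i) :
    ∫⁻ x, marginal μ S f x / marginal μ S g x * g x ∂(Measure.pi μ) ≤ 1 := by
  rw [aux_lintegral_mul μ S (fun x => marginal μ S f x / marginal μ S g x) g hg
    ((aux_marginal_meas μ S hf).div (aux_marginal_meas μ S hg)) _ x₀]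
  · rw [← hf1, aux_lintegral_split μ S f hf x₀]
    exact lmarginal_mono (fun z => aux_div_mul_le _ _) x₀
  · intro x y hxy
    simp only [aux_marginal_congr μ S _ hxy]

lemma aux_safeDiv_meas {δ : Type*} [MeasurableSpace δ] {f g : δ → ℝ≥0∞} (hf : Measurable f)
    (hg : Measurable g) : Measurable (fun x => safeDiv (f x) (g x)) := by
  unfold safeDiv
  exact Measurable.ite (hg (measurableSet_singleton 0)) measurable_const (hf.div hg)

lemma aux_T (μ : ∀ i, Measure (π i)) [∀ i, SigmaFinite (μ i)] (A B : Finset (Fin d))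
    (hAB : Disjoint A B)
    (f g : (∀ i, π i) → ℝ≥0∞) (hf : Measurable f) (hg : Measurable g)
    (hg1 : ∫⁻ x, g x ∂(Measure.pi μ) = 1) (x₀ : ∀ i, π i) :
    ∫⁻ x, condDens μ A B f x * (marginal μ B g x / marginal μ (A ∪ B) g x) * g x
      ∂(Measure.pi μ) ≤ 1 := by
  have mf := fun S => aux_marginal_meas μ S hf
  have mg := fun S => aux_marginal_meas μ S hg
  have mc : Measurable (condDens μ A B f) := aux_safeDiv_meas (mf _) (mf _)
  rw [aux_lintegral_mul μ (A ∪ B)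
    (fun x => condDens μ A B f x * (marginal μ B g x / marginal μ (A ∪ B) g x)) g hg
    (mc.mul ((mg _).div (mg _))) _ x₀]
  · calc _ ≤ lmarginal μ (A ∪ B) (fun z => marginal μ B g z * condDens μ A B f z) x₀ := by
          refine lmarginal_mono (fun z => ?_) x₀
          simp only
          rw [mul_assoc, mul_comm]
          gcongr
          exact aux_div_mul_le _ _
      _ = lmarginal μ B (lmarginal μ A
            (fun z => marginal μ B g z * condDens μ A B f z)) x₀ := by
          rw [lmarginal_union' μ (fun z => marginal μ B g z * condDens μ A B f z) ((mg _).mul mc) hAB]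
      _ ≤ lmarginal μ B (marginal μ B g) x₀ := by
          refine lmarginal_mono (fun z => ?_) x₀
          have hcg : ∀ (k : (∀ i, π i) → ℝ≥0∞) (x y : ∀ i, π i), (∀ i ∉ A, x i = y i) →
              marginal μ B k x = marginal μ B k y := fun k x y hxy =>
            aux_marginal_congr μ B _ (fun i hi => hxy i (Finset.disjoint_right.mp hAB hi))
          rw [aux_lmarginal_mul μ A _ _ mc (hcg g)]
          conv_rhs => rw [← mul_one (marginal μ B g z)]
          gcongr
          have e1 : condDens μ A B f = fun z =>
              (if marginal μ B f z = 0 then 0 else (marginal μ B f z)⁻¹) *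
                marginal μ (A ∪ B) f z := by
            ext z
            unfold condDens safeDiv
            split_ifs
            · simp
            · rw [div_eq_mul_inv, mul_comm]
          rw [e1, aux_lmarginal_mul μ A
            (fun z => if marginal μ B f z = 0 then 0 else (marginal μ B f z)⁻¹) _ (mf _)]
          · have e2 : lmarginal μ A (marginal μ (A ∪ B) f) = marginal μ B f := by
              unfold marginal
              rw [← lmarginal_union μ f hf]
              · congr 1
                ext i
                have : i ∈ A → i ∉ B := fun h => Finset.disjoint_left.mp hAB h
                simp only [Finset.mem_union, Finset.mem_compl]
                tauto
              · rw [Finset.disjoint_left]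
                intro i hi
                simp [hi]
            rw [e2]
            split_ifs
            · simp
            · rw [mul_comm]; exact ENNReal.mul_inv_le_one _
          · intro x y hxy
            simp only [hcg f x y hxy]
      _ = 1 := by rw [← aux_lintegral_split μ B g hg x₀, hg1]
  · intro x y hxy
    have h2 : ∀ i ∈ B, x i = y i := fun i hi => hxy i (Finset.mem_union_right _ hi)
    simp only [condDens, aux_marginal_congr μ (A ∪ B) _ hxy, aux_marginal_congr μ B _ h2]

lemma aux_prod_div {ι : Type*} (s : Finset ι) (f g : ι → ℝ≥0∞) (h0 : ∀ i ∈ s, g i ≠ 0) :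
    ∏ i ∈ s, f i / g i = (∏ i ∈ s, f i) / ∏ i ∈ s, g i := by
  simp_rw [div_eq_mul_inv]
  rw [Finset.prod_mul_distrib, ENNReal.prod_inv_distrib]
  intro i hi j hj _
  exact Or.inl (h0 i hi)

lemma aux_rpow_good {x : ℝ≥0∞} {w : ℝ} (hw : 0 ≤ w) (h : x ≠ 0 ∧ x ≠ ∞) :
    x ^ w ≠ 0 ∧ x ^ w ≠ ∞ := by
  refine ⟨?_, ENNReal.rpow_ne_top_of_nonneg hw h.2⟩
  exact (ENNReal.rpow_pos (pos_iff_ne_zero.mpr h.1) h.2).ne'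

lemma aux_all_good (μ : ∀ i, Measure (π i)) [∀ i, SigmaFinite (μ i)]
    (g : (∀ i, π i) → ℝ≥0∞) (hg : Measurable g) (hg1 : ∫⁻ x, g x ∂(Measure.pi μ) = 1)
    (x₀ : ∀ i, π i) :
    ∀ᵐ x ∂((Measure.pi μ).withDensity g), ∀ S : Finset (Fin d),
      marginal μ S g x ≠ 0 ∧ marginal μ S g x ≠ ∞ :=
  ae_all_iff.mpr fun S => aux_ae_good μ S g hg hg1 x₀

lemma aux_condDens_good (μ : ∀ i, Measure (π i)) (g : (∀ i, π i) → ℝ≥0∞) (x : ∀ i, π i)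
    (h : ∀ S : Finset (Fin d), marginal μ S g x ≠ 0 ∧ marginal μ S g x ≠ ∞)
    (A B : Finset (Fin d)) : condDens μ A B g x ≠ 0 ∧ condDens μ A B g x ≠ ∞ := by
  unfold condDens safeDiv
  rw [if_neg (h B).1]
  exact ⟨ENNReal.div_ne_zero.mpr ⟨(h _).1, (h _).2⟩, ENNReal.div_ne_top (h _).2 (h _).1⟩

lemma aux_compLik_good (μ : ∀ i, Measure (π i)) (α : Sd d → ℝ) (β : Td d → ℝ) (γ : ℝ)
    (hα : ∀ S, 0 ≤ α S) (hβ : ∀ T, 0 ≤ β T) (hγ : 0 < γ)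
    (g : (∀ i, π i) → ℝ≥0∞) (x : ∀ i, π i)
    (h : ∀ S : Finset (Fin d), marginal μ S g x ≠ 0 ∧ marginal μ S g x ≠ ∞) :
    compLik μ α β γ g x ≠ 0 ∧ compLik μ α β γ g x ≠ ∞ := by
  have h1 := fun S : Sd d => aux_rpow_good (div_nonneg (hα S) hγ.le) (h S.1)
  have h2 := fun T : Td d => aux_rpow_good (div_nonneg (hβ T) hγ.le)
    (aux_condDens_good μ g x h T.1.1 T.1.2)
  unfold compLik
  refine ⟨mul_ne_zero (Finset.prod_ne_zero_iff.mpr fun S _ => (h1 S).1)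
    (Finset.prod_ne_zero_iff.mpr fun T _ => (h2 T).1),
    ENNReal.mul_ne_top (ENNReal.prod_ne_top fun S _ => (h1 S).2)
    (ENNReal.prod_ne_top fun T _ => (h2 T).2)⟩

lemma aux_ratio (μ : ∀ i, Measure (π i)) (α : Sd d → ℝ) (β : Td d → ℝ) (γ : ℝ)
    (hα : ∀ S, 0 ≤ α S) (hβ : ∀ T, 0 ≤ β T) (hγ : 0 < γ)
    (f g : (∀ i, π i) → ℝ≥0∞) (x : ∀ i, π i)
    (h : ∀ S : Finset (Fin d), marginal μ S g x ≠ 0 ∧ marginal μ S g x ≠ ∞) :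
    compLik μ α β γ f x / compLik μ α β γ g x =
      (∏ S : Sd d, (marginal μ S.1 f x / marginal μ S.1 g x) ^ (α S / γ)) *
      ∏ T : Td d, (condDens μ T.1.1 T.1.2 f x *
        (marginal μ T.1.2 g x / marginal μ (T.1.1 ∪ T.1.2) g x)) ^ (β T / γ) := by
  have h1 := fun S : Sd d => aux_rpow_good (div_nonneg (hα S) hγ.le) (h S.1)
  have h2 := fun T : Td d => aux_rpow_good (div_nonneg (hβ T) hγ.le)
    (aux_condDens_good μ g x h T.1.1 T.1.2)
  have e2 : ∀ T : Td d, (condDens μ T.1.1 T.1.2 f x *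
        (marginal μ T.1.2 g x / marginal μ (T.1.1 ∪ T.1.2) g x)) ^ (β T / γ) =
      condDens μ T.1.1 T.1.2 f x ^ (β T / γ) / condDens μ T.1.1 T.1.2 g x ^ (β T / γ) := by
    intro T
    rw [← ENNReal.div_rpow_of_nonneg _ _ (div_nonneg (hβ T) hγ.le)]
    congr 1
    rw [div_eq_mul_inv (condDens μ T.1.1 T.1.2 f x)]
    congr 1
    simp only [condDens, safeDiv]
    rw [if_neg (h _).1, ENNReal.inv_div (Or.inl (h _).2) (Or.inl (h _).1)]
  have e1 : ∀ S : Sd d, (marginal μ S.1 f x / marginal μ S.1 g x) ^ (α S / γ) =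
      marginal μ S.1 f x ^ (α S / γ) / marginal μ S.1 g x ^ (α S / γ) := fun S =>
    ENNReal.div_rpow_of_nonneg _ _ (div_nonneg (hα S) hγ.le)
  simp_rw [e1, e2]
  rw [aux_prod_div _ _ _ (fun S _ => (h1 S).1), aux_prod_div _ _ _ (fun T _ => (h2 T).1)]
  unfold compLik
  simp only [div_eq_mul_inv]
  rw [ENNReal.mul_inv]
  · ring
  · exact Or.inl (Finset.prod_ne_zero_iff.mpr fun S _ => (h1 S).1)
  · exact Or.inl (ENNReal.prod_ne_top fun S _ => (h1 S).2)

lemma aux_core (μ : ∀ i, Measure (π i)) [∀ i, SigmaFinite (μ i)]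
    (α : Sd d → ℝ) (β : Td d → ℝ) (γ : ℝ)
    (hα : ∀ S, 0 ≤ α S) (hβ : ∀ T, 0 ≤ β T)
    (hγ : γ = ∑ S, α S + ∑ T, β T) (hγpos : 0 < γ)
    (f g : (∀ i, π i) → ℝ≥0∞) (hf : Measurable f) (hg : Measurable g)
    (hf1 : ∫⁻ x, f x ∂(Measure.pi μ) = 1) (hg1 : ∫⁻ x, g x ∂(Measure.pi μ) = 1)
    (x₀ : ∀ i, π i) :
    ∫⁻ x, compLik μ α β γ f x / compLik μ α β γ g x ∂((Measure.pi μ).withDensity g) ≤ 1 := by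
  set ν := (Measure.pi μ).withDensity g with hν
  have mf := fun S => aux_marginal_meas μ S hf
  have mg := fun S => aux_marginal_meas μ S hg
  let w : Sd d ⊕ Td d → ℝ := Sum.elim (fun S => α S / γ) (fun T => β T / γ)
  let F : Sd d ⊕ Td d → (∀ i, π i) → ℝ≥0∞ := Sum.elim
    (fun S x => marginal μ S.1 f x / marginal μ S.1 g x)
    (fun T x => condDens μ T.1.1 T.1.2 f x *
        (marginal μ T.1.2 g x / marginal μ (T.1.1 ∪ T.1.2) g x))
  have hF : ∀ j, Measurable (F j) := by
    rintro (S | T)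
    · exact (mf _).div (mg _)
    · exact (aux_safeDiv_meas (mf _) (mf _)).mul ((mg _).div (mg _))
  have hF1 : ∀ j, ∫⁻ x, F j x ∂ν ≤ 1 := by
    intro j
    rw [hν, lintegral_withDensity_eq_lintegral_mul _ hg (hF j)]
    simp only [Pi.mul_apply, mul_comm (g _)]
    rcases j with S | T
    · exact aux_S μ S.1 f g hf hg hf1 x₀
    · exact aux_T μ _ _ T.2.2.2 f g hf hg hg1 x₀
  have hw0 : ∀ j, 0 ≤ w j := by
    rintro (S | T)
    · exact div_nonneg (hα S) hγpos.le
    · exact div_nonneg (hβ T) hγpos.le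
  have hw1 : ∑ j, w j = 1 := by
    rw [Fintype.sum_sum_type]
    simp only [w, Sum.elim_inl, Sum.elim_inr]
    rw [← Finset.sum_div, ← Finset.sum_div, ← add_div, ← hγ, div_self hγpos.ne']
  calc _ = ∫⁻ x, ∏ j, F j x ^ w j ∂ν := by
        apply lintegral_congr_ae
        filter_upwards [aux_all_good μ g hg hg1 x₀] with x hx
        rw [aux_ratio μ α β γ hα hβ hγpos f g x hx, Fintype.prod_sum_type]
        rfl
    _ ≤ ∏ j, (∫⁻ x, F j x ∂ν) ^ w j :=
        ENNReal.lintegral_prod_norm_pow_le _ (fun j _ => (hF j).aemeasurable) hw1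
          (fun j _ => hw0 j)
    _ ≤ 1 := by
        apply Finset.prod_le_one'
        intro j _
        exact ENNReal.rpow_le_one (hF1 j) (hw0 j)

lemma aux_joint_meas (μ : ∀ i, Measure (π i)) [∀ i, SigmaFinite (μ i)]
    {Θ : Type*} [MeasurableSpace Θ] (p : Θ → (∀ i, π i) → ℝ≥0∞)
    (hp : Measurable (Function.uncurry p)) (S : Finset (Fin d)) :
    Measurable (fun q : Θ × (∀ i, π i) => marginal μ S (p q.1) q.2) := by
  unfold marginal lmarginal
  apply Measurable.lintegral_prod_right (f := fun (z : Θ × (∀ i, π i))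
    (y : ∀ i : (Sᶜ : Finset (Fin d)), π i) => p z.1 (Function.updateFinset z.2 Sᶜ y))
  have : Measurable (fun z : (Θ × (∀ i, π i)) × (∀ i : (Sᶜ : Finset (Fin d)), π i) =>
      (z.1.1, Function.updateFinset z.1.2 Sᶜ z.2)) :=
    (measurable_fst.comp measurable_fst).prodMk
      (measurable_updateFinset'.comp
        ((measurable_snd.comp measurable_fst).prodMk measurable_snd))
  exact hp.comp this

lemma aux_compLik_meas (μ : ∀ i, Measure (π i)) [∀ i, SigmaFinite (μ i)]
    (α : Sd d → ℝ) (β : Td d → ℝ) (γ : ℝ)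
    {Θ : Type*} [MeasurableSpace Θ] (p : Θ → (∀ i, π i) → ℝ≥0∞)
    (hp : Measurable (Function.uncurry p)) :
    Measurable (fun q : Θ × (∀ i, π i) => compLik μ α β γ (p q.1) q.2) := by
  have h := aux_joint_meas μ p hp
  unfold compLik
  refine Measurable.mul ?_ ?_
  · exact Finset.measurable_prod _ fun S _ => (h S.1).pow_const _
  · exact Finset.measurable_prod _ fun T _ =>
      (aux_safeDiv_meas (h (T.1.1 ∪ T.1.2)) (h T.1.2)).pow_const _

lemma aux_step {Ω Ω' E Θ : Type*} [MeasurableSpace Ω] [MeasurableSpace Ω'] [MeasurableSpace E]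
    [MeasurableSpace Θ] (Pr : Measure Ω) [IsProbabilityMeasure Pr] (Y : Ω → Ω') (X : Ω → E)
    (hY : Measurable Y) (hX : Measurable X) (hind : ProbabilityTheory.IndepFun Y X Pr)
    (Z : Ω' → ℝ≥0∞) (hZ : Measurable Z) (t : Ω' → Θ) (ht : Measurable t)
    (r : Θ × E → ℝ≥0∞) (hr : Measurable r)
    (hr1 : ∀ θ, ∫⁻ x, r (θ, x) ∂(Measure.map X Pr) ≤ 1) (c : ℝ≥0∞) :
    ∫⁻ ω, Z (Y ω) * (if c < Z (Y ω) then 1 else r (t (Y ω), X ω)) ∂Pr ≤ ∫⁻ ω, Z (Y ω) ∂Pr := by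
  have : IsProbabilityMeasure (Measure.map X Pr) := Measure.isProbabilityMeasure_map hX.aemeasurable
  have hmap := (ProbabilityTheory.indepFun_iff_map_prod_eq_prod_map_map
    hY.aemeasurable hX.aemeasurable).mp hind
  let G : Ω' × E → ℝ≥0∞ := fun q => Z q.1 * (if c < Z q.1 then 1 else r (t q.1, q.2))
  have hG0 : Measurable (fun q : Ω' × E => if c < Z q.1 then (1 : ℝ≥0∞) else r (t q.1, q.2)) :=
    Measurable.ite (measurableSet_lt measurable_const (hZ.comp measurable_fst)) measurable_const
      (hr.comp ((ht.comp measurable_fst).prodMk measurable_snd))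
  have hG : Measurable G := (hZ.comp measurable_fst).mul hG0
  calc _ = ∫⁻ q, G q ∂(Measure.map (fun ω => (Y ω, X ω)) Pr) := by
        rw [lintegral_map hG (hY.prodMk hX)]
    _ = ∫⁻ y, ∫⁻ x, G (y, x) ∂(Measure.map X Pr) ∂(Measure.map Y Pr) := by
        rw [hmap, lintegral_prod _ hG.aemeasurable]
    _ ≤ ∫⁻ y, Z y ∂(Measure.map Y Pr) := by
        refine lintegral_mono fun y => ?_
        simp only [G]
        have hm : Measurable (fun x : E => if c < Z y then (1 : ℝ≥0∞) else r (t y, x)) :=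
          hG0.comp (measurable_prodMk_left (x := y))
        rw [lintegral_const_mul _ hm]
        conv_rhs => rw [← mul_one (Z y)]
        gcongr
        split_ifs
        · simp
        · exact hr1 _
    _ = _ := lintegral_map hZ hY

/-- The likelihood-ratio process stopped once it exceeds the level `c`. -/
def auxZ {Ω : Type*} (c : ℝ≥0∞) (ρ : ℕ → Ω → ℝ≥0∞) : ℕ → Ω → ℝ≥0∞
  | 0 => fun _ => 1
  | n + 1 => fun ω => auxZ c ρ n ω * (if c < auxZ c ρ n ω then 1 else ρ n ω)

lemma auxZ_eq {Ω : Type*} (c : ℝ≥0∞) (ρ : ℕ → Ω → ℝ≥0∞) (ω : Ω)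
    (h : ∀ n, ¬ c < auxZ c ρ n ω) (n : ℕ) : auxZ c ρ n ω = ∏ i ∈ Finset.range n, ρ i ω := by
  induction n with
  | zero => simp [auxZ]
  | succ n ih =>
    rw [Finset.prod_range_succ, ← ih]
    simp [auxZ, h n]

lemma auxZ_mono {Ω : Type*} (c : ℝ≥0∞) (ρ : ℕ → Ω → ℝ≥0∞) :
    Monotone (fun n => {ω | c < auxZ c ρ n ω}) := by
  apply monotone_nat_of_le_succ
  intro n ω hω
  have h : c < auxZ c ρ n ω := hω
  change c < auxZ c ρ n ω * (if c < auxZ c ρ n ω then 1 else ρ n ω)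
  rw [if_pos h, mul_one]
  exact h

lemma aux_step_meas {Ω : Type*} [MeasurableSpace Ω] {Z ρ : Ω → ℝ≥0∞} (hZ : Measurable Z)
    (hρ : Measurable ρ) (c : ℝ≥0∞) :
    Measurable (fun ω => Z ω * (if c < Z ω then 1 else ρ ω)) :=
  hZ.mul (Measurable.ite (hZ measurableSet_Ioi) measurable_const hρ)

/-- The sequence of sets `(D_n^a)_{n∈ℕ}`, where
`D_n^a = {θ ∈ Θ : R_{α,β,n}(θ) ≤ 1/a}`, is a valid confidence sequence:
`Pr_{θ*}(∀ n ∈ ℕ : θ* ∈ D_n^a) ≥ 1 − a` for every `a ∈ (0,1)`. -/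
theorem running_confidence_sequence_valid
    {d : ℕ} (hd : 1 ≤ d)
    {π : Fin d → Type*} [∀ i, MeasurableSpace (π i)]
    (μ : ∀ i, Measure (π i)) [∀ i, SigmaFinite (μ i)]
    {Θ : Type*} [MeasurableSpace Θ]
    (p : Θ → (∀ i, π i) → ℝ≥0∞)
    (hp_meas : Measurable (Function.uncurry p))
    (hp_prob : ∀ θ : Θ, ∫⁻ x, p θ x ∂(Measure.pi μ) = 1)
    (α : Sd d → ℝ) (β : Td d → ℝ)
    (hα : ∀ S, 0 ≤ α S) (hβ : ∀ T, 0 ≤ β T)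
    (γ : ℝ) (hγ : γ = ∑ S, α S + ∑ T, β T) (hγpos : 0 < γ)
    {Ω : Type*} [MeasurableSpace Ω]
    (Pr : Measure Ω) [IsProbabilityMeasure Pr]
    (θstar : Θ)
    -- `X 0, X 1, X 2, …` is the i.i.d. sequence `X_1, X_2, …` (0-indexed),
    -- each observation having density `p(·;θ*)` with respect to `μ`
    (X : ℕ → Ω → (∀ i, π i))
    (hX : ∀ i, Measurable (X i))
    (hiid : ProbabilityTheory.iIndepFun X Pr)
    (hlaw : ∀ i, Measure.map (X i) Pr = (Measure.pi μ).withDensity (p θstar))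
    -- the natural filtration `F n = σ(X_1,…,X_n)` (so `F 0` is trivial)
    (F : ℕ → MeasurableSpace Ω)
    (hF : ∀ n, F n = MeasurableSpace.comap (fun ω => fun j : Fin n => X j ω)
      (inferInstance : MeasurableSpace (Fin n → ∀ i, π i)))
    -- non-anticipating estimators: `θtilde i` is the estimator `θ̃_i`
    -- built from `X_1,…,X_i`, i.e. measurable with respect to `F i`
    (θtilde : ℕ → Ω → Θ)
    (hθtilde : ∀ i, @Measurable Ω Θ (F i) _ (θtilde i))
    (a : ℝ) (ha0 : 0 < a) (ha1 : a < 1) :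
    ENNReal.ofReal (1 - a) ≤
      Pr {ω | ∀ n : ℕ, safeDiv
          (∏ i ∈ Finset.range n, compLik μ α β γ (p (θtilde i ω)) (X i ω))
          (∏ i ∈ Finset.range n, compLik μ α β γ (p θstar) (X i ω))
        ≤ 1 / ENNReal.ofReal a} := by
  have hx₀ : Nonempty (∀ i, π i) := by
    by_contra hne
    rw [not_nonempty_iff] at hne
    have := hp_prob θstar
    rw [lintegral_of_isEmpty] at this
    exact zero_ne_one this
  obtain ⟨x₀⟩ := hx₀
  have hpm : ∀ θ, Measurable (p θ) := fun θ => hp_meas.comp measurable_prodMk_left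
  have hcm := aux_compLik_meas μ α β γ p hp_meas
  let r : Θ × (∀ i, π i) → ℝ≥0∞ := fun q =>
    compLik μ α β γ (p q.1) q.2 / compLik μ α β γ (p θstar) q.2
  have hr : Measurable r := hcm.div (hcm.comp (measurable_const.prodMk measurable_snd))
  have hr1 : ∀ i θ, ∫⁻ x, r (θ, x) ∂(Measure.map (X i) Pr) ≤ 1 := by
    intro i θ
    rw [hlaw i]
    exact aux_core μ α β γ hα hβ hγ hγpos (p θ) (p θstar) (hpm θ) (hpm θstar)
      (hp_prob θ) (hp_prob θstar) x₀
  let ρ : ℕ → Ω → ℝ≥0∞ := fun i ω => r (θtilde i ω, X i ω)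
  set c : ℝ≥0∞ := 1 / ENNReal.ofReal a with hc
  -- filtration facts
  have hXF : ∀ n (j : Fin n), Measurable[F n] (X j) := by
    intro n j
    rw [hF n]
    exact (measurable_pi_apply (X := fun _ : Fin n => (∀ i, π i)) j).comp
      (comap_measurable (fun ω => fun j : Fin n => X j ω))
  have hFle : ∀ n, F n ≤ ‹MeasurableSpace Ω› := by
    intro n
    rw [hF n]
    exact Measurable.comap_le (measurable_pi_lambda _ fun j => hX j)
  have hFmono : ∀ n, F n ≤ F (n + 1) := by
    intro n
    conv_lhs => rw [hF n]
    refine Measurable.comap_le ?_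
    exact @measurable_pi_lambda _ _ _ (F (n + 1)) _ _ fun j => hXF (n + 1) j.castSucc
  have hρm : ∀ n, Measurable[F (n + 1)] (ρ n) := by
    intro n
    have h1 : Measurable[F (n + 1)] (θtilde n) := (hθtilde n).mono (hFmono n) le_rfl
    have h2 : Measurable[F (n + 1)] (X n) := hXF (n + 1) (Fin.last n)
    exact hr.comp (h1.prodMk h2)
  have hZm : ∀ n, Measurable[F n] (auxZ c ρ n) := by
    intro n
    induction n with
    | zero => exact @measurable_const _ _ _ (F 0) _
    | succ n ih =>
      have ih' : Measurable[F (n + 1)] (auxZ c ρ n) := ih.mono (hFmono n) le_rfl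
      exact @aux_step_meas Ω (F (n + 1)) _ _ ih' (hρm n) c
  have hind : ∀ n, ProbabilityTheory.Indep (F n)
      (MeasurableSpace.comap (X n) inferInstance) Pr := by
    intro n
    have h := ProbabilityTheory.indep_iSup_of_disjoint
      (m := fun i => MeasurableSpace.comap (X i) inferInstance)
      (fun i => (hX i).comap_le) hiid (S := Set.Iio n) (T := {n}) (by simp)
    refine ProbabilityTheory.indep_of_indep_of_le_left
      (ProbabilityTheory.indep_of_indep_of_le_right h ?_) ?_
    · simp
    · rw [hF n]
      refine Measurable.comap_le ?_
      refine @measurable_pi_lambda _ _ _ (_) _ _ fun j => ?_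
      rw [measurable_iff_comap_le]
      exact le_iSup₂_of_le (j : ℕ) j.2 le_rfl
  have hZint : ∀ n, ∫⁻ ω, auxZ c ρ n ω ∂Pr ≤ 1 := by
    intro n
    induction n with
    | zero => simp [auxZ]
    | succ n ih =>
      refine le_trans ?_ ih
      have hi : @ProbabilityTheory.IndepFun _ _ _ _ (F n) _ (id : Ω → Ω) (X n) Pr := by
        have h := hind n
        rw [← MeasurableSpace.comap_id (m := F n)] at h
        exact h
      exact @aux_step Ω Ω _ Θ _ (F n) _ _ Pr _ id (X n) (measurable_id'' (hFle n)) (hX n) hi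
        (auxZ c ρ n) (hZm n) (θtilde n) (hθtilde n) r hr (hr1 n) c
  have hc0 : c ≠ 0 := by simp [hc]
  have hct : c ≠ ∞ := by simp [hc, ha0]
  have hZset : ∀ n, MeasurableSet {ω | c < auxZ c ρ n ω} := fun n =>
    hFle n _ (hZm n measurableSet_Ioi)
  have hbad : Pr (⋃ n, {ω | c < auxZ c ρ n ω}) ≤ ENNReal.ofReal a := by
    rw [(auxZ_mono c ρ).measure_iUnion]
    refine iSup_le fun n => ?_
    calc Pr {ω | c < auxZ c ρ n ω} ≤ Pr {ω | c ≤ auxZ c ρ n ω} :=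
          measure_mono fun ω (h : c < _) => h.le
      _ ≤ (∫⁻ ω, auxZ c ρ n ω ∂Pr) / c :=
          meas_ge_le_lintegral_div ((hZm n).mono (hFle n) le_rfl).aemeasurable hc0 hct
      _ ≤ 1 / c := by gcongr; exact hZint n
      _ = ENNReal.ofReal a := by simp [hc]
  have hgood : ∀ᵐ ω ∂Pr, ∀ i, compLik μ α β γ (p θstar) (X i ω) ≠ 0 ∧
      compLik μ α β γ (p θstar) (X i ω) ≠ ∞ := by
    rw [ae_all_iff]
    intro i
    have h := aux_all_good μ (p θstar) (hpm θstar) (hp_prob θstar) x₀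
    rw [← hlaw i] at h
    filter_upwards [ae_of_ae_map (hX i).aemeasurable h] with ω hω
    exact aux_compLik_good μ α β γ hα hβ hγpos _ _ hω
  calc ENNReal.ofReal (1 - a) = 1 - ENNReal.ofReal a := by
        rw [ENNReal.ofReal_sub _ ha0.le, ENNReal.ofReal_one]
    _ ≤ 1 - Pr (⋃ n, {ω | c < auxZ c ρ n ω}) := tsub_le_tsub_left hbad _
    _ = Pr (⋃ n, {ω | c < auxZ c ρ n ω})ᶜ := (prob_compl_eq_one_sub (.iUnion hZset)).symm
    _ ≤ _ := by
        apply measure_mono_ae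
        filter_upwards [hgood] with ω hω hnot n
        have hn : ∀ n, ¬ c < auxZ c ρ n ω := by
          intro n h
          exact hnot (Set.mem_iUnion.mpr ⟨n, h⟩)
        unfold safeDiv
        rw [if_neg (Finset.prod_ne_zero_iff.mpr fun i _ => (hω i).1),
          ← aux_prod_div _ _ _ (fun i _ => (hω i).1)]
        have := auxZ_eq c ρ ω hn n
        exact this.symm.le.trans (not_lt.mp (hn n))
end
end
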